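/- Let g : ℝ → ℝ and h : ℝ → ℝ be twice continuously differentiable with bounded derivatives, and define f̃ : L²(F;ℝ) → ℝ by f̃(ϑ) = g(E[h(ϑ)]). Then f̃ is Fréchet differentiable at every ϑ₀ ∈ L²(F;ℝ), with derivative Df̃(ϑ₀)(η) = E[g'(E[h(ϑ₀)]) h'(ϑ₀) η] for all η ∈ L²(F;ℝ). -/

import Mathlib

open MeasureTheory

/-! By Taylor's formula, a function `h` whose derivative is `K`-Lipschitz satisfies
`‖h y - h x - h'(x)(y - x)‖ ≤ K ‖y - x‖²`. Integrating this pointwise bound at `x = u ω`,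
`y = v ω` bounds the remainder of `v ↦ ∫ h(v)` by `K` times the squared `L²` distance of `u` and
`v`, so this functional is differentiable at `u` with derivative `η ↦ ∫ h'(u) η`. Composing with
`g` is the chain rule. -/

open scoped NNReal ENNReal

section Calculus

variable {𝕜 E F : Type*} [NontriviallyNormedField 𝕜]
  [NormedAddCommGroup E] [NormedSpace 𝕜 E] [NormedAddCommGroup F] [NormedSpace 𝕜 F] {K : ℝ≥0}

theorem lipschitzWith_fderiv_iff_lipschitzWith_deriv {f : 𝕜 → F} :
    LipschitzWith K (fderiv 𝕜 f) ↔ LipschitzWith K (deriv f) := by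
  have isometry_toSpanSingleton : Isometry (ContinuousLinearMap.toSpanSingletonLIE 𝕜 F) :=
    LinearIsometryEquiv.isometry _
  have fderiv_eq : fderiv 𝕜 f = ContinuousLinearMap.toSpanSingletonLIE 𝕜 F ∘ deriv f :=
    funext fun _ => toSpanSingleton_deriv.symm
  simp only [LipschitzWith, fderiv_eq, Function.comp_apply, isometry_toSpanSingleton.edist_eq]

theorem lipschitzWith_fderiv_of_norm_deriv_deriv_le {𝕂 : Type*} [RCLike 𝕂] [NormedSpace 𝕂 F]
    {f : 𝕂 → F} {C : ℝ} (hf : Differentiable 𝕂 (deriv f)) (hC : ∀ x, ‖deriv (deriv f) x‖ ≤ C) :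
    LipschitzWith C.toNNReal (fderiv 𝕂 f) :=
  lipschitzWith_fderiv_iff_lipschitzWith_deriv.2 <|
    lipschitzWith_of_nnnorm_deriv_le hf fun x => NNReal.le_toNNReal_of_coe_le (hC x)

theorem norm_sub_sub_fderiv_le_of_lipschitzWith_fderiv [IsRCLikeNormedField 𝕜] [NormedSpace ℝ E]
    {f : E → F} (hf : Differentiable 𝕜 f) (hf' : LipschitzWith K (fderiv 𝕜 f)) (x y : E) :
    ‖f y - f x - fderiv 𝕜 f x (y - x)‖ ≤ K * ‖y - x‖ ^ 2 := by
  have fderiv_close : ∀ z ∈ segment ℝ x y, ‖fderiv 𝕜 f z - fderiv 𝕜 f x‖ ≤ K * ‖y - x‖ :=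
    fun z hz => (hf'.norm_sub_le z x).trans <| by
      gcongr
      exact norm_sub_le_of_mem_segment hz
  calc ‖f y - f x - fderiv 𝕜 f x (y - x)‖
      ≤ K * ‖y - x‖ * ‖y - x‖ :=
        (convex_segment x y).norm_image_sub_le_of_norm_fderiv_le' (fun z _ => hf z) fderiv_close
          (left_mem_segment ℝ x y) (right_mem_segment ℝ x y)
    _ = K * ‖y - x‖ ^ 2 := by ring

end Calculus

section Integration

variable {Ω E F : Type*} [MeasurableSpace Ω] {μ : Measure Ω}
  [NormedAddCommGroup E] [NormedAddCommGroup F] {K : ℝ≥0} {p : ℝ≥0∞}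

theorem Lp_norm_rpow_eq_integral (hp₀ : p ≠ 0) (hp : p ≠ ∞) (f : Lp E p μ) :
    ‖f‖ ^ p.toReal = ∫ ω, ‖f ω‖ ^ p.toReal ∂μ := by
  have integral_norm_rpow_nonneg : 0 ≤ ∫ ω, ‖f ω‖ ^ p.toReal ∂μ :=
    integral_nonneg fun _ => by positivity
  rw [Lp.norm_def, (Lp.memLp f).eLpNorm_eq_integral_rpow_norm hp₀ hp,
    ENNReal.toReal_ofReal (by positivity),
    Real.rpow_inv_rpow integral_norm_rpow_nonneg (ENNReal.toReal_pos hp₀ hp).ne']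

theorem memLp_comp_of_lipschitzWith [IsFiniteMeasure μ] {f : E → F} (hf : LipschitzWith K f)
    {u : Ω → E} (hu : MemLp u p μ) : MemLp (fun ω => f (u ω)) p μ := by
  have hf₀ : LipschitzWith K fun x => f x - f 0 := by
    simpa only [LipschitzWith, edist_sub_right] using hf
  simpa only [Function.comp_def, Pi.add_def, sub_add_cancel] using
    (hf₀.comp_memLp (sub_self _) hu).add (memLp_const (f 0))

variable [NormedSpace ℝ E] [NormedSpace ℝ F]

theorem integrable_clm_apply {q : ℝ≥0∞} [p.HolderConjugate q] {L : Ω → E →L[ℝ] F} {η : Ω → E}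
    (hL : MemLp L p μ) (hη : MemLp η q μ) : Integrable (fun ω => L ω (η ω)) μ :=
  memLp_one_iff_integrable.1 <|
    (ContinuousLinearMap.id ℝ (E →L[ℝ] F)).memLp_of_bilin 1 hL hη

theorem lpPairing_id_toLp_apply {q : ℝ≥0∞} [Fact (1 ≤ p)] [Fact (1 ≤ q)] [p.HolderConjugate q]
    [CompleteSpace F] {L : Ω → E →L[ℝ] F} (hL : MemLp L p μ) (η : Lp E q μ) :
    (ContinuousLinearMap.id ℝ (E →L[ℝ] F)).lpPairing μ p q hL.toLp η = ∫ ω, L ω (η ω) ∂μ := by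
  rw [ContinuousLinearMap.lpPairing_eq_integral]
  refine integral_congr_ae ?_
  filter_upwards [hL.coeFn_toLp] with ω hω
  rw [hω, ContinuousLinearMap.id_apply]

variable {h : E → F}

theorem integrable_comp_of_lipschitzWith_fderiv [IsFiniteMeasure μ] (hh : Differentiable ℝ h)
    (hh' : LipschitzWith K (fderiv ℝ h)) {u : Ω → E} (hu : MemLp u 2 μ) :
    Integrable (fun ω => h (u ω)) μ := by
  have affine : Integrable (fun ω => h 0 + fderiv ℝ h 0 (u ω)) μ :=
    (integrable_const _).add ((fderiv ℝ h 0).integrable_comp (hu.integrable one_le_two))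
  have remainder : Integrable (fun ω => h (u ω) - (h 0 + fderiv ℝ h 0 (u ω))) μ := by
    refine (hu.norm.integrable_sq.const_mul (K : ℝ)).mono'
      ((hh.continuous.comp_aestronglyMeasurable hu.1).sub affine.1) (.of_forall fun ω => ?_)
    simpa only [sub_zero, sub_sub] using
      norm_sub_sub_fderiv_le_of_lipschitzWith_fderiv hh hh' 0 (u ω)
  simpa only [Pi.add_def, sub_add_cancel] using remainder.add affine

theorem norm_integral_comp_sub_sub_integral_fderiv_le [IsFiniteMeasure μ] (hh : Differentiable ℝ h)
    (hh' : LipschitzWith K (fderiv ℝ h)) (u v : Lp E 2 μ) :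
    ‖∫ ω, h (v ω) ∂μ - ∫ ω, h (u ω) ∂μ - ∫ ω, fderiv ℝ h (u ω) ((v - u : Lp E 2 μ) ω) ∂μ‖
      ≤ K * ‖v - u‖ ^ 2 := by
  have comp_int (w : Lp E 2 μ) : Integrable (fun ω => h (w ω)) μ :=
    integrable_comp_of_lipschitzWith_fderiv hh hh' (Lp.memLp w)
  have sub_int : Integrable (fun ω => h (v ω) - h (u ω)) μ := (comp_int v).sub (comp_int u)
  have linear_int := integrable_clm_apply (memLp_comp_of_lipschitzWith hh' (Lp.memLp u))
    (Lp.memLp (v - u))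
  have norm_sq : ‖v - u‖ ^ 2 = ∫ ω, ‖(v - u : Lp E 2 μ) ω‖ ^ 2 ∂μ := by
    simpa using Lp_norm_rpow_eq_integral two_ne_zero ENNReal.ofNat_ne_top (v - u)
  rw [← integral_sub (comp_int v) (comp_int u), ← integral_sub sub_int linear_int, norm_sq,
    ← integral_const_mul]
  refine norm_integral_le_of_norm_le ((Lp.memLp (v - u)).norm.integrable_sq.const_mul _) ?_
  filter_upwards [Lp.coeFn_sub v u] with ω hω
  simpa only [hω, Pi.sub_apply] using
    norm_sub_sub_fderiv_le_of_lipschitzWith_fderiv hh hh' (u ω) (v ω)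

theorem hasFDerivAt_integral_comp [IsFiniteMeasure μ] [CompleteSpace F] (hh : Differentiable ℝ h)
    (hh' : LipschitzWith K (fderiv ℝ h)) (u : Lp E 2 μ) :
    HasFDerivAt (fun v : Lp E 2 μ => ∫ ω, h (v ω) ∂μ)
      ((ContinuousLinearMap.id ℝ (E →L[ℝ] F)).lpPairing μ 2 2
        (memLp_comp_of_lipschitzWith hh' (Lp.memLp u)).toLp) u := by
  refine .of_isLittleO <| (Asymptotics.IsBigO.of_bound K (.of_forall fun v => ?_)).trans_isLittleO
    (Asymptotics.isLittleO_pow_sub_sub u one_lt_two)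
  simpa only [lpPairing_id_toLp_apply, norm_pow, norm_norm] using
    norm_integral_comp_sub_sub_integral_fderiv_le hh hh' u v

end Integration

theorem statement2_general {Ω E F G : Type*} [MeasurableSpace Ω] (P : Measure Ω)
    [IsFiniteMeasure P] [NormedAddCommGroup E] [NormedSpace ℝ E]
    [NormedAddCommGroup F] [NormedSpace ℝ F] [CompleteSpace F]
    [NormedAddCommGroup G] [NormedSpace ℝ G] [CompleteSpace G]
    {g : F → G} {h : E → F} {K : ℝ≥0} (hh : Differentiable ℝ h)
    (hh' : LipschitzWith K (fderiv ℝ h)) (ϑ₀ : Lp E 2 P)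
    (hg : DifferentiableAt ℝ g (∫ ω, h (ϑ₀ ω) ∂P)) :
    ∃ D : Lp E 2 P →L[ℝ] G,
      HasFDerivAt (fun ϑ : Lp E 2 P => g (∫ ω, h (ϑ ω) ∂P)) D ϑ₀ ∧
      ∀ η : Lp E 2 P,
        D η = ∫ ω, fderiv ℝ g (∫ ω', h (ϑ₀ ω') ∂P) (fderiv ℝ h (ϑ₀ ω) (η ω)) ∂P := by
  refine ⟨_, hg.hasFDerivAt.comp ϑ₀ (hasFDerivAt_integral_comp hh hh' ϑ₀), fun η => ?_⟩
  rw [ContinuousLinearMap.comp_apply, lpPairing_id_toLp_apply]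
  exact (ContinuousLinearMap.integral_comp_comm _
    (integrable_clm_apply (memLp_comp_of_lipschitzWith hh' (Lp.memLp ϑ₀)) (Lp.memLp η))).symm

/-- If `g, h : ℝ → ℝ` are twice continuously differentiable with bounded
derivatives, then `f̃(ϑ) := g(E[h(ϑ)])` is Fréchet differentiable at every
`ϑ₀ ∈ L²(F;ℝ)` with `Df̃(ϑ₀)(η) = E[g'(E[h(ϑ₀)]) h'(ϑ₀) η]`. -/
theorem statement2 {Ω : Type*} [MeasurableSpace Ω] (P : Measure Ω) [IsProbabilityMeasure P]
    (g h : ℝ → ℝ) (hg : ContDiff ℝ 2 g) (hh : ContDiff ℝ 2 h)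
    (Cg Ch : ℝ)
    (hg' : ∀ x, |deriv g x| ≤ Cg) (hg'' : ∀ x, |deriv (deriv g) x| ≤ Cg)
    (hh' : ∀ x, |deriv h x| ≤ Ch) (hh'' : ∀ x, |deriv (deriv h) x| ≤ Ch)
    (ϑ₀ : Lp ℝ 2 P) :
    ∃ D : Lp ℝ 2 P →L[ℝ] ℝ,
      HasFDerivAt (fun ϑ : Lp ℝ 2 P => g (∫ ω, h (ϑ ω) ∂P)) D ϑ₀ ∧
      ∀ η : Lp ℝ 2 P,
        D η = ∫ ω, deriv g (∫ ω', h (ϑ₀ ω') ∂P) * deriv h (ϑ₀ ω) * η ω ∂P := by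
  simpa only [fderiv_eq_smul_deriv, smul_eq_mul, mul_comm, mul_left_comm, mul_assoc] using
    statement2_general P (hh.differentiable two_ne_zero)
      (lipschitzWith_fderiv_of_norm_deriv_deriv_le hh.differentiable_deriv_two hh'') ϑ₀
      (hg.differentiable two_ne_zero _)
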